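/- For every finitely generated left Λ-module M, the set Hom_Λ(M, Λ) of left Λ-linear maps M → Λ is a finite-dimensional complex vector space (under pointwise addition and scalar multiplication by ℂ ⊆ Λ₀), and dim_ℂ Hom_Λ(M, Λ) = dim_ℂ M. -/

import Mathlib

/-!
Statement 10: for every finitely generated left `Λ`-module `M`, the left `Λ`-linear dual
`Hom_Λ(M, Λ)` is a finite-dimensional complex vector space (with pointwise operations and
scalars `ℂ ⊆ Λ₀`) of the same complex dimension as `M`.
-/

noncomputable section

/-- `Λ n`: the exterior algebra of `ℂⁿ` (with its `n` odd generators `βᵢ`). -/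
abbrev SuperAlg (n : ℕ) : Type := ExteriorAlgebra ℂ (Fin n → ℂ)

/-- `Λ` regarded as a left module over itself by left multiplication.  (This is exactly
Mathlib's canonical `Semiring.toModule`; we register it explicitly since instance search
does not fire automatically for the `CliffordAlgebra`-based definition.) -/
instance (n : ℕ) : Module (SuperAlg n) (SuperAlg n) := Semiring.toModule

/-- The actions of `ℂ` and `Λ` on `Λ` commute (`ℂ` is central in `Λ`); this provides the
pointwise `ℂ`-vector space structure on `Hom_Λ(M, Λ)`. -/
instance (n : ℕ) : SMulCommClass (SuperAlg n) ℂ (SuperAlg n) :=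
  SMulCommClass.symm ℂ (SuperAlg n) (SuperAlg n)

theorem frob_dual {K A M : Type*} [Field K] [Ring A] [Algebra K A] [FiniteDimensional K A]
    [AddCommGroup M] [Module K M] [Module A M] [IsScalarTower K A M] [Module.Finite A M]
    (ε : A →ₗ[K] K) (h : ∀ a, (∀ b, ε (b * a) = 0) → a = 0) :
    FiniteDimensional K (M →ₗ[A] A) ∧
    Module.finrank K (M →ₗ[A] A) = Module.finrank K M := by
  have hM : FiniteDimensional K M := Module.Finite.trans A M
  let T : A →ₗ[K] Module.Dual K A :=
    LinearMap.mk₂ K (fun a b => ε (b * a)) (by intros; simp [mul_add]) (by intros; simp)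
      (by intros; simp [add_mul]) (by intros; simp)
  have hT : ∀ a b, T a b = ε (b * a) := fun a b => rfl
  have Tinj : Function.Injective T := by
    rw [← LinearMap.ker_eq_bot, LinearMap.ker_eq_bot']
    intro a ha
    exact h a fun b => by rw [← hT, ha]; rfl
  have Tsurj : Function.Surjective T :=
    (LinearMap.injective_iff_surjective_of_finrank_eq_finrank
      (Subspace.dual_finrank_eq).symm).1 Tinj
  let Φ : (M →ₗ[A] A) →ₗ[K] Module.Dual K M :=
    { toFun := fun f => ε ∘ₗ (f.restrictScalars K)
      map_add' := by intros; ext; simp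
      map_smul' := by intros; ext; simp }
  have hΦ : ∀ f m, Φ f m = ε (f m) := fun f m => rfl
  have Φinj : Function.Injective Φ := by
    rw [← LinearMap.ker_eq_bot, LinearMap.ker_eq_bot']
    intro f hf
    ext m
    refine h _ fun b => ?_
    rw [← smul_eq_mul, ← map_smul, ← hΦ, hf]; rfl
  have Φsurj : Function.Surjective Φ := by
    intro g
    choose f hf using fun m : M => Tsurj (g ∘ₗ ((LinearMap.toSpanSingleton A M m).restrictScalars K))
    have hf' : ∀ m b, ε (b * f m) = g (b • m) := by
      intro m b
      rw [← hT, hf]; rfl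
    have key : ∀ x y : A, (∀ b, ε (b * x) = ε (b * y)) → x = y := by
      intro x y hxy
      rw [← sub_eq_zero]
      exact h _ fun b => by rw [mul_sub, map_sub, hxy, sub_self]
    refine ⟨{ toFun := f, map_add' := ?_, map_smul' := ?_ }, ?_⟩
    · intro x y
      refine key _ _ fun b => ?_
      rw [mul_add, map_add, hf', hf', hf', smul_add, map_add]
    · intro c x
      refine key _ _ fun b => ?_
      rw [RingHom.id_apply, smul_eq_mul, ← mul_assoc, hf', hf', mul_smul]
    · ext m
      have := hf' m 1
      rw [one_mul, one_smul] at this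
      exact this
  let e := LinearEquiv.ofBijective Φ ⟨Φinj, Φsurj⟩
  exact ⟨Module.Finite.equiv e.symm, by rw [e.finrank_eq, Subspace.dual_finrank_eq]⟩

theorem ext_nondeg (n : ℕ) (a : SuperAlg n)
    (h : ∀ b, ((Pi.basisFun ℂ (Fin n)).ExteriorAlgebra.coord Finset.univ) (b * a) = 0) :
    a = 0 := by
  set B := (Pi.basisFun ℂ (Fin n)).ExteriorAlgebra with hB
  have cl : ∀ s : Finset (Fin n), s ∈ Set.powersetCard (Fin n) s.card := fun s => rfl
  have h0 : ∀ s t : Finset (Fin n), t ≠ s → B.coord Finset.univ (B sᶜ * B t) = 0 := by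
    intro s t hst
    by_cases hd : Disjoint sᶜ t
    · have := ExteriorAlgebra.basis_mul_of_disjoint (Pi.basisFun ℂ (Fin n)) ⟨sᶜ, cl _⟩ ⟨t, cl _⟩ hd
      rw [← hB] at this
      simp only at this
      rw [this, Units.smul_def, map_zsmul, Module.Basis.coord_apply, Module.Basis.repr_self,
        Finsupp.single_eq_of_ne, smul_zero]
      intro hu
      apply hst
      rw [Set.powersetCard.coe_disjUnion, Finset.disjUnion_eq_union] at hu
      ext i
      have h1 := Finset.mem_univ i
      rw [hu] at h1
      have h2 : i ∈ sᶜ → i ∉ t := fun hi => Finset.disjoint_left.1 hd hi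
      simp only [Finset.mem_union, Finset.mem_compl] at h1 h2
      tauto
    · have := ExteriorAlgebra.basis_mul_of_not_disjoint (Pi.basisFun ℂ (Fin n))
        ⟨sᶜ, cl _⟩ ⟨t, cl _⟩ hd
      rw [← hB] at this
      simp only at this
      rw [this, map_zero]
  have h1 : ∀ s : Finset (Fin n), B.coord Finset.univ (B sᶜ * B s) ≠ 0 := by
    intro s
    have hd : Disjoint sᶜ s := disjoint_compl_left
    have := ExteriorAlgebra.basis_mul_of_disjoint (Pi.basisFun ℂ (Fin n)) ⟨sᶜ, cl _⟩ ⟨s, cl _⟩ hd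
    rw [← hB] at this
    simp only at this
    have hu : sᶜ.disjUnion s hd = Finset.univ := by
      rw [Finset.disjUnion_eq_union]; ext i; simp; tauto
    rw [this, Units.smul_def, map_zsmul, Module.Basis.coord_apply, Module.Basis.repr_self,
      Set.powersetCard.coe_disjUnion, hu, Finsupp.single_eq_same]
    simp
  apply B.ext_elem
  intro s
  have hs := h (B sᶜ)
  rw [← B.sum_repr a, Finset.mul_sum, map_sum, Finset.sum_eq_single s] at hs
  · rw [mul_smul_comm, map_smul, smul_eq_mul] at hs
    simpa using (mul_eq_zero.1 hs).resolve_right (h1 s)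
  · intro t _ ht
    rw [mul_smul_comm, map_smul, h0 s t ht, smul_zero]
  · simp

/-- For every finitely generated left `Λ`-module `M`, the set
`Hom_Λ(M, Λ)` of left `Λ`-linear maps `M → Λ` is a finite-dimensional complex vector space
(under pointwise addition and scalar multiplication by `ℂ ⊆ Λ₀`), and
`dim_ℂ Hom_Λ(M, Λ) = dim_ℂ M`. -/
theorem statement10 (n : ℕ) (M : Type*) [AddCommGroup M] [Module ℂ M]
    [Module (SuperAlg n) M] [IsScalarTower ℂ (SuperAlg n) M] [Module.Finite (SuperAlg n) M] :
    FiniteDimensional ℂ (M →ₗ[SuperAlg n] SuperAlg n) ∧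
    Module.finrank ℂ (M →ₗ[SuperAlg n] SuperAlg n) = Module.finrank ℂ M := by
  haveI : FiniteDimensional ℂ (SuperAlg n) :=
    Module.Finite.of_basis (Pi.basisFun ℂ (Fin n)).ExteriorAlgebra
  exact frob_dual _ (ext_nondeg n)

end
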